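/- Let L : ℝ³ → ℝ be a smooth Lagrangian in the variables (x,u,p), let ξ, η, R : ℝ² → ℝ be smooth functions of (x,u), and let λ : ℝ³ → ℝ be a smooth function of (x,u,p). Define the truncated total derivative D_xF(x,u,p) = ∂_xF(x,u) + p·∂_uF(x,u) for F a function of (x,u), and the λ-prolonged coefficient η₁(x,u,p) = D_xη − p·D_xξ + λ·(η − ξ·p). Suppose the divergence λ-variational symmetry condition holds identically on ℝ³: ξ·∂_xL + η·∂_uL + η₁·∂_pL + L·(D_xξ + λ·ξ) = D_xR + λ·R. Define I(x,u,p) = ξ(x,u)·(L(x,u,p) − p·∂_pL(x,u,p)) + η(x,u)·∂_pL(x,u,p) − R(x,u). Then for every open interval J ⊆ ℝ and every twice differentiable u : J → ℝ solving the Euler-Lagrange equation d/dx[∂_pL(x,u(x),u'(x))] = ∂_uL(x,u(x),u'(x)) on J, the function φ(x) = I(x,u(x),u'(x)) satisfies φ'(x) = −λ(x,u(x),u'(x))·φ(x) for all x ∈ J. -/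

import Mathlib

/-- Truncated total derivative `D_x F (x,u,p) = ∂_x F(x,u) + p ∂_u F(x,u)`. -/
noncomputable def Dx (F : ℝ → ℝ → ℝ) (x u p : ℝ) : ℝ :=
  deriv (fun t => F t u) x + p * deriv (fun v => F x v) u

/-- Partial derivative of the Lagrangian with respect to `x`. -/
noncomputable def Lx (L : ℝ → ℝ → ℝ → ℝ) (x u p : ℝ) : ℝ := deriv (fun t => L t u p) x

/-- Partial derivative of the Lagrangian with respect to `u`. -/
noncomputable def Lu (L : ℝ → ℝ → ℝ → ℝ) (x u p : ℝ) : ℝ := deriv (fun v => L x v p) u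

/-- Partial derivative of the Lagrangian with respect to `p`. -/
noncomputable def Lp (L : ℝ → ℝ → ℝ → ℝ) (x u p : ℝ) : ℝ := deriv (fun q => L x u q) p

/-- First λ-prolonged coefficient `η₁ = D_x η − p D_x ξ + λ (η − ξ p)`. -/
noncomputable def eta1 (ξ η : ℝ → ℝ → ℝ) (lam : ℝ → ℝ → ℝ → ℝ) (x u p : ℝ) : ℝ :=
  Dx η x u p - p * Dx ξ x u p + lam x u p * (η x u - ξ x u * p)

/-- The Noether-type function `I = ξ (L − p ∂_p L) + η ∂_p L − R`. -/
noncomputable def NoetherI (L : ℝ → ℝ → ℝ → ℝ) (ξ η R : ℝ → ℝ → ℝ) (x u p : ℝ) : ℝ :=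
  ξ x u * (L x u p - p * Lp L x u p) + η x u * Lp L x u p - R x u

/-- Chain rule along the graph of a curve for a function of `(x,u)`. -/
theorem hasDerivAt_comp_graph {F : ℝ → ℝ → ℝ} {u : ℝ → ℝ} {x : ℝ}
    (hF : DifferentiableAt ℝ (fun z : ℝ × ℝ => F z.1 z.2) (x, u x))
    (hu : DifferentiableAt ℝ u x) :
    HasDerivAt (fun t => F t (u t)) (Dx F x (u x) (deriv u x)) x := by
  have hF' := hF.hasFDerivAt
  have hx := hF'.comp_hasDerivAt x ((hasDerivAt_id x).prodMk (hasDerivAt_const x (u x)))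
  have hv := hF'.comp_hasDerivAt (u x)
    ((hasDerivAt_const (u x) x).prodMk (hasDerivAt_id (u x)))
  refine (hF'.comp_hasDerivAt x ((hasDerivAt_id x).prodMk hu.hasDerivAt)).congr_deriv ?_
  have hsplit : ((1 : ℝ), deriv u x) = (1, 0) + deriv u x • ((0 : ℝ), (1 : ℝ)) := by simp
  rw [hsplit, map_add, map_smul, smul_eq_mul]
  exact congrArg₂ (fun a b => a + deriv u x * b) hx.deriv.symm hv.deriv.symm

/-- Chain rule along a curve in the first jet space for a function of `(x,u,p)`. -/
theorem hasDerivAt_comp_jet {L : ℝ → ℝ → ℝ → ℝ} {u v : ℝ → ℝ} {x u' v' : ℝ}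
    (hL : DifferentiableAt ℝ (fun z : ℝ × ℝ × ℝ => L z.1 z.2.1 z.2.2) (x, u x, v x))
    (hu : HasDerivAt u u' x) (hv : HasDerivAt v v' x) :
    HasDerivAt (fun t => L t (u t) (v t))
      (Lx L x (u x) (v x) + u' * Lu L x (u x) (v x) + v' * Lp L x (u x) (v x)) x := by
  have hL' := hL.hasFDerivAt
  have h₁ := hL'.comp_hasDerivAt x
    ((hasDerivAt_id x).prodMk ((hasDerivAt_const x (u x)).prodMk (hasDerivAt_const x (v x))))
  have h₂ := hL'.comp_hasDerivAt (u x)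
    ((hasDerivAt_const (u x) x).prodMk
      ((hasDerivAt_id (u x)).prodMk (hasDerivAt_const (u x) (v x))))
  have h₃ := hL'.comp_hasDerivAt (v x)
    ((hasDerivAt_const (v x) x).prodMk
      ((hasDerivAt_const (v x) (u x)).prodMk (hasDerivAt_id (v x))))
  refine (hL'.comp_hasDerivAt x ((hasDerivAt_id x).prodMk (hu.prodMk hv))).congr_deriv ?_
  have hsplit : ((1 : ℝ), u', v') =
      (1, 0, 0) + u' • ((0 : ℝ), (1 : ℝ), (0 : ℝ)) + v' • ((0 : ℝ), (0 : ℝ), (1 : ℝ)) := by simp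
  rw [hsplit, map_add, map_add, map_smul, map_smul, smul_eq_mul, smul_eq_mul]
  exact congrArg₂ (· + ·)
    (congrArg₂ (fun a b => a + u' * b) h₁.deriv.symm h₂.deriv.symm)
    (congrArg (v' * ·) h₃.deriv.symm)

/-- The momentum `∂_p L` of a smooth Lagrangian is differentiable. -/
theorem differentiable_Lp {L : ℝ → ℝ → ℝ → ℝ}
    (hL : ContDiff ℝ (⊤ : ℕ∞) fun z : ℝ × ℝ × ℝ => L z.1 z.2.1 z.2.2) :
    Differentiable ℝ fun z : ℝ × ℝ × ℝ => Lp L z.1 z.2.1 z.2.2 := by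
  have hLp : (fun z : ℝ × ℝ × ℝ => Lp L z.1 z.2.1 z.2.2) =
      fun z => fderiv ℝ (fun z : ℝ × ℝ × ℝ => L z.1 z.2.1 z.2.2) z (0, 0, 1) := by
    funext z
    have hz := ((hL.differentiable (by simp)) z).hasFDerivAt
    exact (hz.comp_hasDerivAt z.2.2 ((hasDerivAt_const z.2.2 z.1).prodMk
      ((hasDerivAt_const z.2.2 z.2.1).prodMk (hasDerivAt_id z.2.2)))).deriv
  rw [hLp]
  exact ((hL.fderiv_right (m := 1) (by norm_cast)).differentiable (by simp)).clm_apply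
    (differentiable_const _)

/-- If `X`, the λ-prolongation of `ξ∂_x + η∂_u`, is a divergence λ-variational symmetry of `L`
with divergence term `R`, then along every solution of the Euler–Lagrange equation the function
`φ(x) = I(x,u(x),u'(x))` satisfies `φ' = −λ φ`. -/
theorem lambda_variational_symmetry_noether_identity
    (L lam : ℝ → ℝ → ℝ → ℝ) (ξ η R : ℝ → ℝ → ℝ)
    (hL : ContDiff ℝ (⊤ : ℕ∞) fun z : ℝ × ℝ × ℝ => L z.1 z.2.1 z.2.2)
    (hξ : ContDiff ℝ (⊤ : ℕ∞) fun z : ℝ × ℝ => ξ z.1 z.2)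
    (hη : ContDiff ℝ (⊤ : ℕ∞) fun z : ℝ × ℝ => η z.1 z.2)
    (hR : ContDiff ℝ (⊤ : ℕ∞) fun z : ℝ × ℝ => R z.1 z.2)
    (hlam : ContDiff ℝ (⊤ : ℕ∞) fun z : ℝ × ℝ × ℝ => lam z.1 z.2.1 z.2.2)
    (hsym : ∀ x u p : ℝ,
      ξ x u * Lx L x u p + η x u * Lu L x u p + eta1 ξ η lam x u p * Lp L x u p
        + L x u p * (Dx ξ x u p + lam x u p * ξ x u)
      = Dx R x u p + lam x u p * R x u)
    (J : Set ℝ) (hJopen : IsOpen J) (hJconn : J.OrdConnected)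
    (u : ℝ → ℝ)
    (hu1 : ∀ x ∈ J, DifferentiableAt ℝ u x)
    (hu2 : ∀ x ∈ J, DifferentiableAt ℝ (deriv u) x)
    (hEL : ∀ x ∈ J,
      deriv (fun t => Lp L t (u t) (deriv u t)) x = Lu L x (u x) (deriv u x)) :
    ∀ x ∈ J, HasDerivAt (fun t => NoetherI L ξ η R t (u t) (deriv u t))
      (-(lam x (u x) (deriv u x)) * NoetherI L ξ η R x (u x) (deriv u x)) x := by
  intro x hx
  have hu := (hu1 x hx).hasDerivAt
  have hv := (hu2 x hx).hasDerivAt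
  have hξ' := hasDerivAt_comp_graph (hξ.differentiable (by simp) _) (hu1 x hx)
  have hη' := hasDerivAt_comp_graph (hη.differentiable (by simp) _) (hu1 x hx)
  have hR' := hasDerivAt_comp_graph (hR.differentiable (by simp) _) (hu1 x hx)
  have hL' := hasDerivAt_comp_jet (hL.differentiable (by simp) _) hu hv
  have hLp := (hasDerivAt_comp_jet (differentiable_Lp hL _) hu hv).differentiableAt.hasDerivAt
  rw [hEL x hx] at hLp
  refine (((hξ'.mul (hL'.sub (hv.mul hLp))).add (hη'.mul hLp)).sub hR').congr_deriv ?_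
  have hsym' := hsym x (u x) (deriv u x)
  simp only [eta1] at hsym'
  simp only [NoetherI, Pi.mul_apply, Pi.sub_apply]
  linear_combination hsym'
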